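/- Let $m \geq 1$ and $\boldsymbol{\sigma} \in \{0,1\}^m$, and define $\widetilde{\mathcal{H}}_m^{\rm sym}(\boldsymbol{\sigma})$ as the multiset union of $\mathcal{H}_m(\boldsymbol{\sigma})$ with $\{(x, 1-y) : (x,y) \in \mathcal{H}_m(\boldsymbol{\sigma})\}$ (a multiset of $N = 2^{m+1}$ points). Then $\left| L_2(\widetilde{\mathcal{H}}_m^{\rm sym}(\boldsymbol{\sigma})) - \frac{1}{N}\sqrt{\frac{\log N}{24 \log 2}} \right| \leq \frac{C}{N}$ for an absolute constant $C$ (independent of $m$ and $\boldsymbol{\sigma}$); i.e., $L_2(\widetilde{\mathcal{H}}_m^{\rm sym}(\boldsymbol{\sigma})) = \frac{1}{N}\sqrt{\frac{\log N}{24\log 2}} + O(1/N)$. -/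

import Mathlib

/-!
The local discrepancy of the symmetrised Hammersley points is, up to a bounded error, a martingale
in the binary digits of `α` and `β`.

Index the grid heights `k / 2 ^ m` by the digit vector `t` of the unique point of that height, so
that `β = hamY m σ t` and `hamX m t` is the abscissa of this point. One more digit replaces `α = z`
by `(a + z) / 2` and `t` by `(t, b)`, and the local discrepancy `D` then either stays the same or
gains the contribution of a single point (`D_app`). Write `p = [hamX t < α] - α` and `p*` for the
same expression with `t` complemented. Then `Psi = D + D* + (p + p*) / 2` takes, over the four
choices of `(a, b)`, the values `Psi ± p / 2` and `Psi ± p* / 2` formed at the previous level, so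
the mean of `Psi ^ 2` grows by the mean of `(p ^ 2 + p* ^ 2) / 8` (`Psi_step`). Since `hamX` is
equidistributed, that mean is `1 / 24 + O(4 ^ (-m))` (`integral_p_sq`, `sum_hamX`), and
`E[Psi ^ 2] = m / 24 + O(1)` (`B_eq`).

Inside a grid cell `Δtil` is an explicit linear function of the height that differs from `Psi` by a
bounded amount (`til_eq`, `sq_compare`). By Young's inequality the mean square of `Δtil` is
`(m + 1) / 24 + O(√(m + 1))` (`til_sq_bound`); taking square roots leaves an error `O(1)`, and
`log (2 ^ (m + 1)) / (24 log 2) = (m + 1) / 24`.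
-/

open Finset

/-- Distance to the nearest integer. -/
noncomputable def dnn (x : ℝ) : ℝ := |x - round x|

/-- Real value of a bit. -/
def bitr (b : Bool) : ℝ := if b then 1 else 0

/-- First coordinate of a Hammersley point: t_m/2 + ... + t_1/2^m. -/
noncomputable def hamX (m : ℕ) (t : Fin m → Bool) : ℝ :=
  ∑ j : Fin m, bitr (t j) / 2 ^ (m - j.val)

/-- Second coordinate of a shifted Hammersley point: s_1/2 + ... + s_m/2^m with s_j = t_j ⊕ σ_j. -/
noncomputable def hamY (m : ℕ) (σ t : Fin m → Bool) : ℝ :=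
  ∑ j : Fin m, bitr (xor (t j) (σ j)) / 2 ^ (j.val + 1)

/-- Local discrepancy of the shifted Hammersley point set H_m(σ). -/
noncomputable def Δham (m : ℕ) (σ : Fin m → Bool) (α β : ℝ) : ℝ :=
  ((Finset.univ.filter (fun t : Fin m → Bool => hamX m t < α ∧ hamY m σ t < β)).card : ℝ)
    - 2 ^ m * α * β

/-- digit i (1-based) of an m-digit vector, with value false outside 1..m. -/
def dig (m : ℕ) (a : Fin m → Bool) (i : ℕ) : Bool :=
  if h : 1 ≤ i ∧ i ≤ m then a ⟨i - 1, by omega⟩ else false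

/-- The m-bit real number with binary digits a: ∑ a_j 2^{-j}. -/
noncomputable def mval (m : ℕ) (a : Fin m → Bool) : ℝ :=
  ∑ j : Fin m, bitr (a j) / 2 ^ (j.val + 1)

/-- The index function j(u) associated with digits a of α, digits b of β, and shift τ. -/
def jfun (m : ℕ) (a b τ : Fin m → Bool) (u : ℕ) : ℕ :=
  Nat.findGreatest (fun j => dig m a (m + 1 - j) ≠ xor (dig m b j) (dig m τ j)) u

/-- Smallest m-bit number ≥ α. -/
noncomputable def upm (m : ℕ) (α : ℝ) : ℝ := (⌈2 ^ m * α⌉ : ℝ) / 2 ^ m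

/-- Local discrepancy of the symmetrized Hammersley point set H_m(σ) ∪ H_m(σ*) (multiset union). -/
noncomputable def Δsym (m : ℕ) (σ : Fin m → Bool) (α β : ℝ) : ℝ :=
  (((Finset.univ.filter (fun t : Fin m → Bool => hamX m t < α ∧ hamY m σ t < β)).card : ℝ)
    + ((Finset.univ.filter (fun t : Fin m → Bool =>
        hamX m t < α ∧ hamY m (fun j => !(σ j)) t < β)).card : ℝ))
    - 2 ^ (m + 1) * α * β

/-- Local discrepancy of H_m(σ) ∪ {(x,1-y)} (multiset union, 2^(m+1) points). -/
noncomputable def Δtil (m : ℕ) (σ : Fin m → Bool) (α β : ℝ) : ℝ :=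
  (((Finset.univ.filter (fun t : Fin m → Bool => hamX m t < α ∧ hamY m σ t < β)).card : ℝ)
    + ((Finset.univ.filter (fun t : Fin m → Bool =>
        hamX m t < α ∧ 1 - hamY m σ t < β)).card : ℝ))
    - 2 ^ (m + 1) * α * β

namespace Ham

/-! ### Digit vectors and Hammersley points -/

/-- Real-valued indicator of a proposition. -/
noncomputable def ind (P : Prop) : ℝ := open Classical in if P then 1 else 0

lemma ind_true {P : Prop} (h : P) : ind P = 1 := by simp [ind, h]
lemma ind_false {P : Prop} (h : ¬ P) : ind P = 0 := by simp [ind, h]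
lemma ind_congr {P Q : Prop} (h : P ↔ Q) : ind P = ind Q := by rw [propext h]
lemma ind_cases (P : Prop) : ind P = 0 ∨ ind P = 1 := by
  by_cases h : P <;> simp [ind, h]

/-- Bitwise complement of a digit vector. -/
def cpl {m : ℕ} (t : Fin m → Bool) : Fin m → Bool := fun j => !(t j)

lemma cpl_cpl {m : ℕ} (t : Fin m → Bool) : cpl (cpl t) = t := by
  funext j; simp [cpl]

/-- Digit vector `t` of length `m` followed by the digit `b`. -/
def app {m : ℕ} (t : Fin m → Bool) (b : Bool) : Fin (m + 1) → Bool :=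
  Fin.snoc (α := fun _ => Bool) t b

lemma app_castSucc {m : ℕ} (t : Fin m → Bool) (b : Bool) (j : Fin m) :
    app t b j.castSucc = t j := by simp [app]

lemma app_last {m : ℕ} (t : Fin m → Bool) (b : Bool) : app t b (Fin.last m) = b := by
  simp [app]

lemma cpl_app {m : ℕ} (t : Fin m → Bool) (b : Bool) : cpl (app t b) = app (cpl t) (!b) := by
  funext j
  refine Fin.lastCases ?_ (fun i => ?_) j
  · simp [cpl, app_last]
  · simp [cpl, app_castSucc]

/-- The digit vector with its last digit removed. -/
def pre {m : ℕ} (σ : Fin (m + 1) → Bool) : Fin m → Bool := fun j => σ j.castSucc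

lemma sum_app {m : ℕ} (f : (Fin (m + 1) → Bool) → ℝ) :
    ∑ t, f t = ∑ t : Fin m → Bool, (f (app t false) + f (app t true)) := by
  rw [← (Fin.snocEquiv (fun _ : Fin (m + 1) => Bool)).sum_comp f, Fintype.sum_prod_type_right]
  refine Finset.sum_congr rfl fun t _ => ?_
  rw [Fintype.sum_bool, add_comm]
  rfl

lemma sum_cpl {m : ℕ} (f : (Fin m → Bool) → ℝ) : ∑ t, f (cpl t) = ∑ t, f t :=
  Function.Bijective.sum_comp (Function.Involutive.bijective cpl_cpl) f

lemma hamX_app {m : ℕ} (t : Fin m → Bool) (b : Bool) :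
    hamX (m + 1) (app t b) = (bitr b + hamX m t) / 2 := by
  unfold hamX
  rw [Fin.sum_univ_castSucc, app_last, add_div, Finset.sum_div, add_comm]
  congr 1
  · simp
  · refine Finset.sum_congr rfl fun j _ => ?_
    rw [app_castSucc, div_div, ← pow_succ, Fin.val_castSucc, Nat.sub_add_comm j.isLt.le]

lemma hamX_zero (t : Fin 0 → Bool) : hamX 0 t = 0 := by simp [hamX]
lemma hamY_zero (σ t : Fin 0 → Bool) : hamY 0 σ t = 0 := by simp [hamY]

lemma exists_app {m : ℕ} (t : Fin (m + 1) → Bool) : ∃ t' b, t = app t' b :=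
  ⟨pre t, t (Fin.last m), by
    funext j
    refine Fin.lastCases ?_ (fun i => ?_) j
    · rw [app_last]
    · rw [app_castSucc, pre]⟩

lemma bitr_nonneg (b : Bool) : 0 ≤ bitr b := by cases b <;> simp [bitr]
lemma bitr_le (b : Bool) : bitr b ≤ 1 := by cases b <;> simp [bitr]

lemma hamX_mem {m : ℕ} (t : Fin m → Bool) : 0 ≤ hamX m t ∧ hamX m t < 1 := by
  induction m with
  | zero => simp [hamX_zero]
  | succ m ih =>
    obtain ⟨t', b, rfl⟩ := exists_app t
    have := ih t'
    have h1 := bitr_nonneg b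
    have h2 := bitr_le b
    rw [hamX_app]
    constructor <;> linarith

/-- The integer `2 ^ m * hamY m σ t`. -/
def ky (m : ℕ) (σ t : Fin m → Bool) : ℕ :=
  ∑ j : Fin m, (xor (t j) (σ j)).toNat * 2 ^ (m - 1 - j.val)

lemma ky_app {m : ℕ} (σ : Fin (m + 1) → Bool) (t : Fin m → Bool) (b : Bool) :
    ky (m + 1) σ (app t b) = 2 * ky m (pre σ) t + (xor b (σ (Fin.last m))).toNat := by
  unfold ky
  rw [Fin.sum_univ_castSucc, app_last, Finset.mul_sum]
  congr 1
  · refine Finset.sum_congr rfl fun j _ => ?_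
    rw [app_castSucc, Fin.val_castSucc, pre, mul_left_comm, ← pow_succ']
    congr 2
    have := j.isLt
    omega
  · simp

lemma hamY_eq {m : ℕ} (σ t : Fin m → Bool) : hamY m σ t = ky m σ t / 2 ^ m := by
  unfold hamY ky
  push_cast
  rw [Finset.sum_div]
  refine Finset.sum_congr rfl fun j _ => ?_
  have hb : ((xor (t j) (σ j)).toNat : ℝ) = bitr (xor (t j) (σ j)) := by
    cases xor (t j) (σ j) <;> simp [bitr]
  have hm : (2 : ℝ) ^ m = 2 ^ (m - 1 - j.val) * 2 ^ (j.val + 1) := by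
    rw [← pow_add]; congr 1; have := j.isLt; omega
  rw [hb, hm]
  field_simp

lemma ky_inj {m : ℕ} (σ t t' : Fin m → Bool) (h : ky m σ t = ky m σ t') : t = t' := by
  induction m with
  | zero => exact Subsingleton.elim _ _
  | succ m ih =>
    obtain ⟨u, b, rfl⟩ := exists_app t
    obtain ⟨u', b', rfl⟩ := exists_app t'
    rw [ky_app, ky_app] at h
    generalize σ (Fin.last m) = s at h
    have h1 : ky m (pre σ) u = ky m (pre σ) u' := by
      cases b <;> cases b' <;> cases s <;> simp at h <;> omega
    have h2 : b = b' := by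
      rw [h1] at h
      revert h
      cases b <;> cases b' <;> cases s <;> simp
    rw [ih _ _ _ h1, h2]

lemma ky_cpl {m : ℕ} (σ t : Fin m → Bool) : ky m (cpl σ) (cpl t) = ky m σ t := by
  simp [ky, cpl]

/-- Complementing the digits reflects the grid `{0, …, 2 ^ m - 1}`. -/
lemma ky_add_cpl {m : ℕ} (σ t : Fin m → Bool) :
    ky m σ t + ky m (cpl σ) t + 1 = 2 ^ m := by
  induction m with
  | zero => simp [ky]
  | succ m ih =>
    obtain ⟨u, b, rfl⟩ := exists_app t
    have h := ih (pre σ) u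
    rw [ky_app, ky_app, pow_succ, ← h]
    have : pre (cpl σ) = cpl (pre σ) := rfl
    rw [this]
    have e : cpl σ (Fin.last m) = !(σ (Fin.last m)) := rfl
    rw [e]
    cases b <;> cases σ (Fin.last m) <;> simp <;> ring

lemma ind_ky_app {m : ℕ} (σ : Fin (m + 1) → Bool) {t t' : Fin m → Bool} (h : t' ≠ t)
    {b b' : Bool} :
    ind (ky (m + 1) σ (app t' b') < ky (m + 1) σ (app t b))
      = ind (ky m (pre σ) t' < ky m (pre σ) t) := by
  have hne : ky m (pre σ) t' ≠ ky m (pre σ) t := fun e => h (ky_inj _ _ _ e)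
  rw [ky_app, ky_app]
  have h1 := Bool.toNat_le (xor b (σ (Fin.last m)))
  have h2 := Bool.toNat_le (xor b' (σ (Fin.last m)))
  apply ind_congr
  omega

lemma sum_ind_eq {m : ℕ} (u : Fin m → Bool) (f : (Fin m → Bool) → ℝ) :
    ∑ t', f t' * ind (t' = u) = f u := by
  rw [Finset.sum_eq_single u]
  · simp [ind]
  · intro b _ hb
    simp [ind, hb]
  · simp

/-! ### The digit recursion of the local discrepancy -/

/-- Local discrepancy of the shifted Hammersley points at height `β = hamY m σ t`; using digit
vectors `t` in place of the grid heights `β` makes the abscissa `hamX m t` of the point at that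
height directly available. -/
noncomputable def D (m : ℕ) (σ : Fin m → Bool) (α : ℝ) (t : Fin m → Bool) : ℝ :=
  ∑ t' : Fin m → Bool, ind (hamX m t' < α) * ind (ky m σ t' < ky m σ t) - α * ky m σ t

/-- Heights are equidistributed: `ky m σ` is a bijection onto `{0, …, 2 ^ m - 1}`. -/
lemma sum_ky_lt {m : ℕ} (σ t : Fin m → Bool) :
    ∑ t' : Fin m → Bool, ind (ky m σ t' < ky m σ t) = ky m σ t := by
  induction m with
  | zero => simp [ky, ind]
  | succ m ih =>
    obtain ⟨u, b, rfl⟩ := exists_app t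
    have h2 : ∑ t' : Fin m → Bool, ind (t' = u) = 1 := by
      simpa using sum_ind_eq u fun _ => 1
    have key : ∀ t' : Fin m → Bool,
        ind (ky (m + 1) σ (app t' false) < ky (m + 1) σ (app u b))
        + ind (ky (m + 1) σ (app t' true) < ky (m + 1) σ (app u b))
        = 2 * ind (ky m (pre σ) t' < ky m (pre σ) u)
          + bitr (xor b (σ (Fin.last m))) * ind (t' = u) := by
      intro t'
      by_cases e : t' = u
      · subst e
        rw [ky_app, ky_app, ky_app]
        generalize σ (Fin.last m) = s
        cases b <;> cases s <;> simp [ind, bitr]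
      · rw [ind_ky_app _ e, ind_ky_app _ e, ind_false e]
        ring
    rw [sum_app, Finset.sum_congr rfl fun t' _ => key t', Finset.sum_add_distrib,
      ← Finset.mul_sum, ← Finset.mul_sum, ih, h2, ky_app]
    push_cast
    congr 1
    cases xor b (σ (Fin.last m)) <;> simp [bitr]

/-- `p m α t` is the discrepancy contribution of a single point at abscissa `hamX m t`. -/
noncomputable def p (m : ℕ) (α : ℝ) (t : Fin m → Bool) : ℝ := ind (hamX m t < α) - α

/-- The leading digit of `hamX (app t b)` is `b`, so the comparison with `(a + z) / 2` is decided by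
`a` and `b` when they differ. The statement includes the endpoints `z = 0` and `z = 1`. -/
lemma ind_hamX_app {m : ℕ} (t : Fin m → Bool) (a b : Bool) {z : ℝ} (hz : z ∈ Set.Icc (0 : ℝ) 1) :
    ind (hamX (m + 1) (app t b) < (bitr a + z) / 2)
      = if a = b then ind (hamX m t < z) else bitr a := by
  have := hamX_mem t
  rw [hamX_app]
  rcases hz with ⟨h0, h1⟩
  cases a <;> cases b
  · simp only [bitr, if_true]
    apply ind_congr
    constructor <;> intro h <;> simp at * <;> linarith
  · rw [ind_false]
    · simp [bitr]
    · simp [bitr]; linarith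
  · rw [ind_true]
    · simp [bitr]
    · simp [bitr]; linarith
  · simp only [bitr, if_true]
    apply ind_congr
    constructor <;> intro h <;> linarith

/-- Passing from `m` to `m + 1` digits prepends a binary digit `a` to the abscissa and appends a
digit to the height. A coarse height keeps its local discrepancy; a fine one gains one point. -/
lemma D_app {m : ℕ} (σ : Fin (m + 1) → Bool) (t : Fin m → Bool) (a b : Bool) {z : ℝ}
    (hz : z ∈ Set.Icc (0 : ℝ) 1) :
    D (m + 1) σ ((bitr a + z) / 2) (app t b)
      = D m (pre σ) z t
        + bitr (xor b (σ (Fin.last m))) * p (m + 1) ((bitr a + z) / 2) (app t (σ (Fin.last m))) := by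
  unfold D p
  rw [sum_app]
  simp only [ind_hamX_app _ _ _ hz]
  have h2 : ∑ t' : Fin m → Bool, (if a = σ (Fin.last m) then ind (hamX m t' < z) else bitr a)
      * ind (t' = t) = (if a = σ (Fin.last m) then ind (hamX m t < z) else bitr a) :=
    sum_ind_eq t _
  have key : ∀ t' : Fin m → Bool,
      (if a = false then ind (hamX m t' < z) else bitr a)
          * ind (ky (m + 1) σ (app t' false) < ky (m + 1) σ (app t b))
        + (if a = true then ind (hamX m t' < z) else bitr a)
          * ind (ky (m + 1) σ (app t' true) < ky (m + 1) σ (app t b))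
        = (ind (hamX m t' < z) * ind (ky m (pre σ) t' < ky m (pre σ) t)
            + bitr a * ind (ky m (pre σ) t' < ky m (pre σ) t))
          + bitr (xor b (σ (Fin.last m))) *
            ((if a = σ (Fin.last m) then ind (hamX m t' < z) else bitr a) * ind (t' = t)) := by
    intro t'
    by_cases e : t' = t
    · subst e
      rw [ky_app, ky_app, ky_app]
      generalize σ (Fin.last m) = s
      cases a <;> cases b <;> cases s <;> simp [ind, bitr]
    · rw [ind_ky_app _ e, ind_ky_app _ e, ind_false e]
      cases a <;> simp [bitr, add_comm]
  rw [Finset.sum_congr rfl fun t' _ => key t', Finset.sum_add_distrib, Finset.sum_add_distrib,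
    ← Finset.mul_sum, ← Finset.mul_sum, h2, sum_ky_lt, ky_app]
  push_cast
  have hb : ((xor b (σ (Fin.last m))).toNat : ℝ) = bitr (xor b (σ (Fin.last m))) := by
    cases xor b (σ (Fin.last m)) <;> simp [bitr]
  rw [hb]
  ring

/-- The symmetrised local discrepancy at a grid height, corrected by a bounded term that turns it
into a martingale with respect to the digits of `α` and `β`. -/
noncomputable def Psi (m : ℕ) (σ : Fin m → Bool) (α : ℝ) (t : Fin m → Bool) : ℝ :=
  D m σ α t + D m (cpl σ) α (cpl t) + (p m α t + p m α (cpl t)) / 2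

/-- The martingale property in squared form. At fixed `z` and `t`, the increment of `Psi` takes each
of the values `± p / 2` and `± p* / 2` once, as the new digits of `α` and `β` vary. -/
lemma Psi_step {m : ℕ} (σ : Fin (m + 1) → Bool) (t : Fin m → Bool) {z : ℝ}
    (hz : z ∈ Set.Icc (0 : ℝ) 1) :
    (Psi (m + 1) σ ((bitr false + z) / 2) (app t false) ^ 2
      + Psi (m + 1) σ ((bitr false + z) / 2) (app t true) ^ 2)
    + (Psi (m + 1) σ ((bitr true + z) / 2) (app t false) ^ 2
      + Psi (m + 1) σ ((bitr true + z) / 2) (app t true) ^ 2)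
    = 4 * Psi m (pre σ) z t ^ 2 + (p m z t ^ 2 + p m z (cpl t) ^ 2) / 2 := by
  have e : cpl σ (Fin.last m) = !(σ (Fin.last m)) := rfl
  have e' : pre (cpl σ) = cpl (pre σ) := rfl
  unfold Psi
  simp only [cpl_app, D_app _ _ _ _ hz, e, e']
  generalize D m (pre σ) z t = d1
  generalize D m (cpl (pre σ)) z (cpl t) = d2
  unfold p
  simp only [ind_hamX_app _ _ _ hz]
  generalize ind (hamX m t < z) = x
  generalize ind (hamX m (cpl t) < z) = y
  cases σ (Fin.last m) <;> simp [bitr] <;> ring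

/-! ### The local discrepancy inside a grid cell -/

/-- The two counting functions are constant on `(k / 2 ^ m, (k + 1) / 2 ^ m]`. Reflection
`y ↦ 1 - y` complements the digits of `y` and shifts by `2 ^ (-m)`, so there the reflected points
are counted exactly as those with shift `cpl σ` below `k / 2 ^ m`. -/
lemma til_eq {m : ℕ} (σ t : Fin m → Bool) (α : ℝ) {v : ℝ} (hv : v ∈ Set.Ioc (0 : ℝ) 1) :
    Δtil m σ α ((ky m σ t + v) / 2 ^ m)
      = D m σ α t + D m (cpl σ) α (cpl t) + ind (hamX m t < α) - 2 * α * v := by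
  classical
  obtain ⟨h0, h1⟩ := hv
  have hpos : (0 : ℝ) < 2 ^ m := by positivity
  have e1 : ∀ t' : Fin m → Bool,
      (if hamX m t' < α ∧ hamY m σ t' < (ky m σ t + v) / 2 ^ m then (1 : ℝ) else 0)
        = ind (hamX m t' < α) * ind (ky m σ t' < ky m σ t)
          + ind (hamX m t' < α) * ind (t' = t) := by
    intro t'
    have : hamY m σ t' < (ky m σ t + v) / 2 ^ m ↔ ky m σ t' < ky m σ t ∨ t' = t := by
      rw [hamY_eq, div_lt_div_iff_of_pos_right hpos]
      constructor
      · intro h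
        have h' : (ky m σ t' : ℝ) < (ky m σ t + 1 : ℕ) := by push_cast; linarith
        rcases Nat.lt_succ_iff_lt_or_eq.mp (Nat.cast_lt.mp h') with h | h
        · exact Or.inl h
        · exact Or.inr (ky_inj _ _ _ h)
      · rintro (h | rfl)
        · have : (ky m σ t' : ℝ) < ky m σ t := Nat.cast_lt.mpr h
          linarith
        · linarith
    simp only [this]
    by_cases ht : t' = t
    · subst ht; simp [ind]
    · by_cases hx : hamX m t' < α <;> simp [ind, ht, hx]
  have e2 : ∀ t' : Fin m → Bool,
      (if hamX m t' < α ∧ 1 - hamY m σ t' < (ky m σ t + v) / 2 ^ m then (1 : ℝ) else 0)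
        = ind (hamX m t' < α) * ind (ky m (cpl σ) t' < ky m (cpl σ) (cpl t)) := by
    intro t'
    have hk : (ky m σ t' : ℝ) + ky m (cpl σ) t' + 1 = 2 ^ m := by
      exact_mod_cast ky_add_cpl σ t'
    have : 1 - hamY m σ t' < (ky m σ t + v) / 2 ^ m
        ↔ ky m (cpl σ) t' < ky m (cpl σ) (cpl t) := by
      have h3 : 1 - hamY m σ t' = (ky m (cpl σ) t' + 1) / 2 ^ m := by
        rw [hamY_eq]; field_simp; linarith
      rw [h3, ky_cpl, div_lt_div_iff_of_pos_right hpos]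
      constructor
      · intro h
        have h' : (ky m (cpl σ) t' : ℝ) < ky m σ t := by linarith
        exact Nat.cast_lt.mp h'
      · intro h
        have h' : ((ky m (cpl σ) t' + 1 : ℕ) : ℝ) ≤ ky m σ t := Nat.cast_le.mpr h
        push_cast at h'
        linarith
    simp only [this]
    simp [ind, ← ite_and, and_comm]
  unfold Δtil D
  rw [Finset.natCast_card_filter, Finset.natCast_card_filter]
  have f1 := Finset.sum_congr (s₁ := Finset.univ) rfl fun t' _ => e1 t'
  have f2 := Finset.sum_congr (s₁ := Finset.univ) rfl fun t' _ => e2 t'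
  rw [Finset.sum_add_distrib, sum_ind_eq t (fun t' => ind (hamX m t' < α))] at f1
  rw [ky_cpl] at f2 ⊢
  have h4 : 2 ^ (m + 1) * α * ((ky m σ t + v) / 2 ^ m) = 2 * α * (ky m σ t + v) := by
    rw [pow_succ]; field_simp
  rw [h4]
  convert congrArg₂ (fun x y : ℝ => x + y - 2 * α * (ky m σ t + v)) f1 f2 using 1
  ring

/-! ### Integration by digits -/

/-- Measurable and locally bounded; a class of functions closed under sums and products and
integrable over bounded intervals. -/
def Nice (φ : ℝ → ℝ) : Prop := Measurable φ ∧ ∀ R, ∃ C, ∀ x, |x| ≤ R → |φ x| ≤ C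

lemma Nice.integrable {φ : ℝ → ℝ} (h : Nice φ) (a b : ℝ) :
    IntervalIntegrable φ MeasureTheory.volume a b := by
  obtain ⟨C, hC⟩ := h.2 (max |a| |b|)
  refine (intervalIntegrable_const (c := C) (a := a) (b := b)).mono_fun
    h.1.aestronglyMeasurable ?_
  refine (MeasureTheory.ae_restrict_iff' measurableSet_uIoc).mpr (.of_forall fun x hx => ?_)
  have hx' : |x| ≤ max |a| |b| := by
    rcases Set.mem_uIoc.mp hx with ⟨h1, h2⟩ | ⟨h1, h2⟩
    · exact abs_le_max_abs_abs h1.le h2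
    · rw [max_comm]; exact abs_le_max_abs_abs h1.le h2
  exact (hC x hx').trans (le_abs_self C)

lemma Nice.const (c : ℝ) : Nice fun _ => c := ⟨measurable_const, fun _ => ⟨|c|, fun _ _ => le_rfl⟩⟩
lemma Nice.id : Nice fun x => x := ⟨measurable_id, fun R => ⟨R, fun _ h => h⟩⟩

lemma Nice.add {f g : ℝ → ℝ} (hf : Nice f) (hg : Nice g) : Nice fun x => f x + g x := by
  refine ⟨hf.1.add hg.1, fun R => ?_⟩
  obtain ⟨C, hC⟩ := hf.2 R
  obtain ⟨C', hC'⟩ := hg.2 R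
  exact ⟨C + C', fun x hx => (abs_add_le _ _).trans (add_le_add (hC x hx) (hC' x hx))⟩

lemma Nice.mul {f g : ℝ → ℝ} (hf : Nice f) (hg : Nice g) : Nice fun x => f x * g x := by
  refine ⟨hf.1.mul hg.1, fun R => ?_⟩
  obtain ⟨C, hC⟩ := hf.2 R
  obtain ⟨C', hC'⟩ := hg.2 R
  refine ⟨C * C', fun x hx => ?_⟩
  rw [abs_mul]
  exact mul_le_mul (hC x hx) (hC' x hx) (abs_nonneg _) ((abs_nonneg _).trans (hC x hx))

lemma Nice.sub {f g : ℝ → ℝ} (hf : Nice f) (hg : Nice g) : Nice fun x => f x - g x := by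
  have := hf.add ((Nice.const (-1)).mul hg)
  convert this using 2
  ring

lemma Nice.sq {f : ℝ → ℝ} (hf : Nice f) : Nice fun x => f x ^ 2 := by
  simpa only [pow_two] using hf.mul hf

lemma Nice.div {f : ℝ → ℝ} (hf : Nice f) (c : ℝ) : Nice fun x => f x / c := by
  simpa only [div_eq_mul_inv] using hf.mul (Nice.const c⁻¹)

lemma Nice.sum {ι : Type*} (s : Finset ι) {f : ι → ℝ → ℝ} (hf : ∀ i, Nice (f i)) :
    Nice fun x => ∑ i ∈ s, f i x := by
  classical
  induction s using Finset.induction_on with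
  | empty => simpa using Nice.const 0
  | insert i s hi ih => simpa [Finset.sum_insert hi] using (hf i).add ih

lemma Nice.ind_of {P : ℝ → Prop} (h : MeasurableSet {x | P x}) : Nice fun x => ind (P x) := by
  classical
  refine ⟨?_, fun R => ⟨1, fun x _ => ?_⟩⟩
  · unfold ind
    exact Measurable.ite h measurable_const measurable_const
  · rcases ind_cases (P x) with h | h <;> simp [h]

lemma Nice.ind_lt (c : ℝ) : Nice fun x => ind (c < x) := Nice.ind_of measurableSet_Ioi

lemma Nice.comp_affine {f : ℝ → ℝ} (hf : Nice f) (c d : ℝ) : Nice fun x => f (c * x + d) := by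
  refine ⟨hf.1.comp (by fun_prop), fun R => ?_⟩
  obtain ⟨C, hC⟩ := hf.2 (|c| * R + |d|)
  refine ⟨C, fun x hx => hC _ ((abs_add_le _ _).trans ?_)⟩
  rw [abs_mul]
  gcongr

lemma nice_D {m : ℕ} (σ t : Fin m → Bool) : Nice fun α => D m σ α t :=
  (Nice.sum _ fun t' => (Nice.ind_lt (hamX m t')).mul (Nice.const _)).sub (Nice.id.mul (Nice.const _))

lemma nice_p {m : ℕ} (t : Fin m → Bool) : Nice fun α => p m α t := (Nice.ind_lt _).sub Nice.id

lemma nice_Psi {m : ℕ} (σ t : Fin m → Bool) : Nice fun α => Psi m σ α t :=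
  ((nice_D σ t).add (nice_D (cpl σ) (cpl t))).add (((nice_p t).add (nice_p (cpl t))).div 2)

lemma nice_til {m : ℕ} (σ : Fin m → Bool) (α : ℝ) : Nice fun β => Δtil m σ α β := by
  classical
  unfold Δtil
  simp only [Finset.natCast_card_filter]
  refine Nice.sub (Nice.add (Nice.sum _ fun t => ?_) (Nice.sum _ fun t => ?_))
    ((Nice.const _).mul Nice.id)
  · convert (Nice.const (ind (hamX m t < α))).mul (Nice.ind_lt (hamY m σ t)) using 2
    simp [ind, ← ite_and, and_comm]
  · convert (Nice.const (ind (hamX m t < α))).mul (Nice.ind_lt (1 - hamY m σ t)) using 2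
    simp [ind, ← ite_and, and_comm]

lemma integral_half {φ : ℝ → ℝ} (h : Nice φ) :
    ∫ x in (0 : ℝ)..1, φ x
      = ((∫ z in (0 : ℝ)..1, φ ((bitr false + z) / 2))
        + ∫ z in (0 : ℝ)..1, φ ((bitr true + z) / 2)) / 2 := by
  have e : ∀ b z, (bitr b + z) / 2 = 2⁻¹ * z + bitr b / 2 := fun b z => by ring
  simp only [e]
  rw [intervalIntegral.integral_comp_mul_add _ (by norm_num),
    intervalIntegral.integral_comp_mul_add _ (by norm_num),
    ← intervalIntegral.integral_add_adjacent_intervals (h.integrable 0 (1 / 2))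
      (h.integrable (1 / 2) 1)]
  norm_num [bitr]
  ring

/-- The unit interval is the union of the cells of length `2 ^ (-m)` based at the grid heights. -/
lemma integral_cells {m : ℕ} (σ : Fin m → Bool) {φ : ℝ → ℝ} (h : Nice φ) :
    ∫ x in (0 : ℝ)..1, φ x
      = (∑ t, ∫ v in (0 : ℝ)..1, φ ((ky m σ t + v) / 2 ^ m)) / 2 ^ m := by
  induction m with
  | zero => simp [ky]
  | succ m ih =>
    have key : ∀ t : Fin m → Bool,
        (∫ v in (0 : ℝ)..1, φ ((ky m (pre σ) t + v) / 2 ^ m))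
          = ((∫ v in (0 : ℝ)..1, φ ((ky (m + 1) σ (app t false) + v) / 2 ^ (m + 1)))
            + ∫ v in (0 : ℝ)..1, φ ((ky (m + 1) σ (app t true) + v) / 2 ^ (m + 1))) / 2 := by
      intro t
      have hn : Nice fun v => φ ((ky m (pre σ) t + v) / 2 ^ m) := by
        convert h.comp_affine (1 / 2 ^ m) (ky m (pre σ) t / 2 ^ m) using 3
        ring
      have e : ∀ (b : Bool) (v : ℝ), ((ky m (pre σ) t : ℝ) + (bitr b + v) / 2) / 2 ^ m
          = ((2 * ky m (pre σ) t + b.toNat : ℕ) + v) / 2 ^ (m + 1) := by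
        intro b v
        rw [pow_succ]
        cases b <;> simp [bitr] <;> field_simp
        ring
      rw [integral_half hn]
      simp only [e, ky_app]
      cases σ (Fin.last m)
      · simp
      · simp [add_comm]
    rw [ih (pre σ), sum_app, Finset.sum_congr rfl fun t _ => key t, ← Finset.sum_div, div_div,
      pow_succ, mul_comm]

lemma integral_p_sq {m : ℕ} (t : Fin m → Bool) :
    ∫ α in (0 : ℝ)..1, p m α t ^ 2 = 1 / 3 - (hamX m t - hamX m t ^ 2) := by
  obtain ⟨h0, h1⟩ := hamX_mem t
  unfold p
  generalize hamX m t = e at *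
  have hn : Nice fun α => (ind (e < α) - α) ^ 2 := ((Nice.ind_lt e).sub Nice.id).sq
  rw [← intervalIntegral.integral_add_adjacent_intervals (hn.integrable 0 e) (hn.integrable e 1)]
  have e1 : ∫ α in (0 : ℝ)..e, (ind (e < α) - α) ^ 2 = ∫ α in (0 : ℝ)..e, α ^ 2 := by
    refine intervalIntegral.integral_congr fun α hα => ?_
    rw [Set.uIcc_of_le h0] at hα
    rw [ind_false (not_lt.mpr hα.2)]
    ring
  have e2 : ∫ α in e..1, (ind (e < α) - α) ^ 2 = ∫ α in e..1, (1 - α) ^ 2 := by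
    refine intervalIntegral.integral_congr_ae (.of_forall fun α hα => ?_)
    rw [Set.uIoc_of_le h1.le] at hα
    rw [ind_true hα.1]
  have e3 : ∫ α in e..1, (1 - α) ^ 2 = ∫ α in (0 : ℝ)..(1 - e), α ^ 2 := by
    rw [intervalIntegral.integral_comp_sub_left (fun x => x ^ 2) 1]
    simp
  rw [e1, e2, e3, integral_pow, integral_pow]
  norm_num
  ring

lemma sum_hamX (m : ℕ) :
    ∑ t : Fin m → Bool, (hamX m t - hamX m t ^ 2) = (2 ^ m - 1 / 2 ^ m) / 6 := by
  induction m with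
  | zero => simp [hamX_zero]
  | succ m ih =>
    rw [sum_app]
    have : ∀ t : Fin m → Bool,
        (hamX (m + 1) (app t false) - hamX (m + 1) (app t false) ^ 2)
          + (hamX (m + 1) (app t true) - hamX (m + 1) (app t true) ^ 2)
        = (hamX m t - hamX m t ^ 2) / 2 + 1 / 4 := by
      intro t
      rw [hamX_app, hamX_app]
      simp [bitr]
      ring
    rw [Finset.sum_congr rfl fun t _ => this t, Finset.sum_add_distrib, ← Finset.sum_div, ih]
    simp
    field_simp
    ring

lemma integral_sum_p_sq (m : ℕ) :
    ∑ t : Fin m → Bool, ∫ α in (0 : ℝ)..1, p m α t ^ 2 = (2 ^ m + 1 / 2 ^ m) / 6 := by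
  rw [Finset.sum_congr rfl fun t _ => integral_p_sq t, Finset.sum_sub_distrib, sum_hamX]
  simp
  ring

/-! ### The second moment -/

/-- Second moment of the martingale: integrated over `α`, and summed rather than averaged over the
`2 ^ m` digit vectors `t`. -/
noncomputable def B (m : ℕ) (σ : Fin m → Bool) : ℝ :=
  ∑ t, ∫ α in (0 : ℝ)..1, Psi m σ α t ^ 2

lemma B_succ {m : ℕ} (σ : Fin (m + 1) → Bool) :
    B (m + 1) σ = 2 * B m (pre σ) + (2 ^ m + 1 / 2 ^ m) / 12 := by
  have hn : ∀ t (b : Bool), Nice fun z => Psi (m + 1) σ ((bitr b + z) / 2) t ^ 2 := by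
    intro t b
    convert (nice_Psi σ t).sq.comp_affine (1 / 2) (bitr b / 2) using 4
    ring
  have key : ∀ t : Fin m → Bool,
      (∫ α in (0 : ℝ)..1, Psi (m + 1) σ α (app t false) ^ 2)
        + (∫ α in (0 : ℝ)..1, Psi (m + 1) σ α (app t true) ^ 2)
      = 2 * (∫ α in (0 : ℝ)..1, Psi m (pre σ) α t ^ 2)
        + ((∫ α in (0 : ℝ)..1, p m α t ^ 2) + ∫ α in (0 : ℝ)..1, p m α (cpl t) ^ 2) / 4 := by
    intro t
    rw [integral_half (nice_Psi σ _).sq, integral_half (nice_Psi σ (app t true)).sq]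
    have h1 := intervalIntegral.integral_congr (μ := MeasureTheory.volume) (a := 0) (b := 1)
      (fun z hz => Psi_step σ t (z := z) (by rwa [Set.uIcc_of_le zero_le_one] at hz))
    rw [intervalIntegral.integral_add (((hn _ _).add (hn _ _)).integrable _ _)
        (((hn _ _).add (hn _ _)).integrable _ _),
      intervalIntegral.integral_add ((hn _ _).integrable _ _) ((hn _ _).integrable _ _),
      intervalIntegral.integral_add ((hn _ _).integrable _ _) ((hn _ _).integrable _ _),
      intervalIntegral.integral_add (((Nice.const 4).mul (nice_Psi _ _).sq).integrable _ _)
        ((((nice_p t).sq.add (nice_p (cpl t)).sq).div 2).integrable _ _),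
      intervalIntegral.integral_const_mul, intervalIntegral.integral_div,
      intervalIntegral.integral_add ((nice_p t).sq.integrable _ _)
        ((nice_p (cpl t)).sq.integrable _ _)] at h1
    linarith
  unfold B
  rw [sum_app, Finset.sum_congr rfl fun t _ => key t, Finset.sum_add_distrib, ← Finset.mul_sum,
    ← Finset.sum_div, Finset.sum_add_distrib,
    sum_cpl (fun t : Fin m → Bool => ∫ α in (0 : ℝ)..1, p m α t ^ 2), integral_sum_p_sq]
  ring

lemma B_eq {m : ℕ} (σ : Fin m → Bool) :
    B m σ = 2 ^ m * (m / 24 + 7 / 18) - 1 / (18 * 2 ^ m) := by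
  induction m with
  | zero =>
    have h : ∀ (t : Fin 0 → Bool) (α : ℝ), Psi 0 σ α t = p 0 α t := by
      intro t α
      have : cpl t = t := Subsingleton.elim _ _
      have hk : ∀ s : Fin 0 → Bool, ky 0 s t = 0 := fun s => by simp [ky]
      simp [Psi, this, D, hk, ind_false]
    unfold B
    simp only [h, integral_sum_p_sq]
    norm_num
  | succ m ih =>
    rw [B_succ, ih]
    push_cast
    field_simp
    ring

/-- The mean square of `Δtil`, with the integral over each cell of heights carried out. -/
lemma integral_til {m : ℕ} (σ : Fin m → Bool) :
    ∫ α in (0 : ℝ)..1, ∫ β in (0 : ℝ)..1, (Δtil m σ α β) ^ 2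
      = (∑ t, ∫ α in (0 : ℝ)..1,
          ((D m σ α t + D m (cpl σ) α (cpl t) + ind (hamX m t < α) - α) ^ 2 + α ^ 2 / 3))
        / 2 ^ m := by
  have inner : ∀ α : ℝ, ∫ β in (0 : ℝ)..1, (Δtil m σ α β) ^ 2
      = (∑ t, ((D m σ α t + D m (cpl σ) α (cpl t) + ind (hamX m t < α) - α) ^ 2 + α ^ 2 / 3))
        / 2 ^ m := by
    intro α
    rw [integral_cells σ (nice_til σ α).sq]
    congr 1
    refine Finset.sum_congr rfl fun t _ => ?_
    generalize hU : D m σ α t + D m (cpl σ) α (cpl t) + ind (hamX m t < α) = U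
    have : ∫ v in (0 : ℝ)..1, Δtil m σ α ((ky m σ t + v) / 2 ^ m) ^ 2
        = ∫ v in (0 : ℝ)..1, (U ^ 2 - 4 * U * α * v + 4 * α ^ 2 * v ^ 2) := by
      refine intervalIntegral.integral_congr_ae (.of_forall fun v hv => ?_)
      rw [Set.uIoc_of_le zero_le_one] at hv
      rw [til_eq σ t α hv, hU]
      ring
    rw [this, intervalIntegral.integral_add
        (Continuous.intervalIntegrable (by fun_prop) _ _)
        (Continuous.intervalIntegrable (by fun_prop) _ _),
      intervalIntegral.integral_sub
        (Continuous.intervalIntegrable (by fun_prop) _ _)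
        (Continuous.intervalIntegrable (by fun_prop) _ _),
      intervalIntegral.integral_const_mul, intervalIntegral.integral_const_mul,
      integral_pow, integral_id]
    norm_num
    ring
  simp only [inner]
  rw [intervalIntegral.integral_div, intervalIntegral.integral_finsetSum]
  intro t _
  exact (((((nice_D σ t).add (nice_D (cpl σ) (cpl t))).add (Nice.ind_lt _)).sub Nice.id).sq.add
    (Nice.id.sq.div 3)).integrable _ _

/-- `Δtil` and `Psi` differ by a bounded amount, so their squares are comparable up to `ε Psi ^ 2`
and a term of order `1 / ε`. -/
lemma sq_compare {m : ℕ} (σ t : Fin m → Bool) {α ε : ℝ} (hα : α ∈ Set.Icc (0 : ℝ) 1)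
    (hε : 0 < ε) :
    |((D m σ α t + D m (cpl σ) α (cpl t) + ind (hamX m t < α) - α) ^ 2 + α ^ 2 / 3)
      - Psi m σ α t ^ 2| ≤ ε * Psi m σ α t ^ 2 + (9 / ε + 10) := by
  obtain ⟨h0, h1⟩ := hα
  obtain ⟨r, hr, hr3⟩ : ∃ r, D m σ α t + D m (cpl σ) α (cpl t) + ind (hamX m t < α) - α
      = Psi m σ α t + r ∧ |r| ≤ 3 := by
    refine ⟨_, (add_sub_cancel _ _).symm, ?_⟩
    unfold Psi p
    rw [abs_le]
    rcases ind_cases (hamX m t < α) with h | h <;>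
      rcases ind_cases (hamX m (cpl t) < α) with h' | h' <;> rw [h, h'] <;>
      constructor <;> linarith
  rw [hr]
  generalize Psi m σ α t = P
  have hr9 : r ^ 2 ≤ 9 := by
    have := sq_abs r
    nlinarith [abs_nonneg r]
  have hα2 : α ^ 2 ≤ 1 := by nlinarith
  -- Young's inequality `2 |P r| ≤ ε P ^ 2 + r ^ 2 / ε`
  have y1 : |2 * P * r| ≤ ε * P ^ 2 + 9 / ε := by
    have e1 : ε * P ^ 2 + r ^ 2 / ε - 2 * P * r = (ε * P - r) ^ 2 / ε := by field_simp; ring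
    have e2 : ε * P ^ 2 + r ^ 2 / ε + 2 * P * r = (ε * P + r) ^ 2 / ε := by field_simp; ring
    have p1 : 0 ≤ (ε * P - r) ^ 2 / ε := by positivity
    have p2 : 0 ≤ (ε * P + r) ^ 2 / ε := by positivity
    have p3 : r ^ 2 / ε ≤ 9 / ε := by gcongr
    rw [abs_le]
    constructor <;> linarith
  have := abs_le.mp y1
  rw [abs_le]
  constructor <;> nlinarith [sq_nonneg r, sq_nonneg α]

lemma integral_compare {m : ℕ} (σ : Fin m → Bool) {ε : ℝ} (hε : 0 < ε) :
    |(∫ α in (0 : ℝ)..1, ∫ β in (0 : ℝ)..1, (Δtil m σ α β) ^ 2) - B m σ / 2 ^ m|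
      ≤ ε * (B m σ / 2 ^ m) + (9 / ε + 10) := by
  rw [integral_til, ← sub_div, abs_div, abs_of_pos (by positivity : (0 : ℝ) < 2 ^ m), div_le_iff₀
    (by positivity)]
  have hR : (ε * (B m σ / 2 ^ m) + (9 / ε + 10)) * 2 ^ m
      = ∑ t : Fin m → Bool, (ε * (∫ α in (0 : ℝ)..1, Psi m σ α t ^ 2) + (9 / ε + 10)) := by
    rw [Finset.sum_add_distrib, ← Finset.mul_sum, ← B]
    simp
    field_simp
  rw [hR]
  unfold B
  rw [← Finset.sum_sub_distrib]
  refine (Finset.abs_sum_le_sum_abs _ _).trans (Finset.sum_le_sum fun t _ => ?_)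
  have n1 := (((((nice_D σ t).add (nice_D (cpl σ) (cpl t))).add
    (Nice.ind_lt (hamX m t))).sub Nice.id).sq.add (Nice.id.sq.div 3))
  have n2 := (nice_Psi σ t).sq
  have n3 := ((Nice.const ε).mul n2).add (Nice.const (9 / ε + 10))
  rw [← intervalIntegral.integral_sub (n1.integrable _ _) (n2.integrable _ _)]
  have hI : ε * (∫ α in (0 : ℝ)..1, Psi m σ α t ^ 2) + (9 / ε + 10)
      = ∫ α in (0 : ℝ)..1, (ε * Psi m σ α t ^ 2 + (9 / ε + 10)) := by
    rw [intervalIntegral.integral_add (((Nice.const ε).mul n2).integrable _ _)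
      ((Nice.const _).integrable _ _), intervalIntegral.integral_const_mul]
    simp
  rw [hI]
  refine (intervalIntegral.abs_integral_le_integral_abs zero_le_one).trans ?_
  exact intervalIntegral.integral_mono_on zero_le_one ((n1.sub n2).integrable _ _).abs
    (n3.integrable _ _) fun α hα => sq_compare σ t hα hε

/-- The mean square of `Δtil` is `(m + 1) / 24` up to `O(√(m + 1))`. -/
lemma til_sq_bound {m : ℕ} (σ : Fin m → Bool) :
    |(∫ α in (0 : ℝ)..1, ∫ β in (0 : ℝ)..1, (Δtil m σ α β) ^ 2) - ((m : ℝ) + 1) / 24|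
      ≤ 25 * √((m : ℝ) + 1) := by
  have hm : (0 : ℝ) ≤ m := Nat.cast_nonneg m
  generalize hs : √((m : ℝ) + 1) = s
  have hs1 : 1 ≤ s := by rw [← hs]; exact Real.one_le_sqrt.mpr (by linarith)
  have hss : s ^ 2 = m + 1 := by rw [← hs]; exact Real.sq_sqrt (by linarith)
  have h := integral_compare σ (ε := 1 / s) (by positivity)
  have hB : B m σ / 2 ^ m = m / 24 + 7 / 18 - 1 / (18 * (2 ^ m) ^ 2) := by
    rw [B_eq]; field_simp
  have h2 : (1 : ℝ) / (18 * (2 ^ m) ^ 2) ≤ 1 / 18 := by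
    have : (1 : ℝ) ≤ (2 ^ m) ^ 2 := one_le_pow₀ (one_le_pow₀ (by norm_num))
    exact one_div_le_one_div_of_le (by norm_num) (by linarith)
  have h3 : (0 : ℝ) ≤ 1 / (18 * (2 ^ m) ^ 2) := by positivity
  have hB1 : |B m σ / 2 ^ m - ((m : ℝ) + 1) / 24| ≤ 1 := by
    rw [hB, abs_le]; constructor <;> linarith
  have hB2 : B m σ / 2 ^ m ≤ s ^ 2 := by rw [hB, hss]; linarith
  have h4 : 1 / s * (B m σ / 2 ^ m) ≤ s := by
    rw [one_div, inv_mul_le_iff₀ (by positivity)]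
    linarith [hB2, sq s]
  have h5 : 9 / (1 / s) = 9 * s := by field_simp
  rw [h5] at h
  refine (abs_sub_le _ (B m σ / 2 ^ m) _).trans ?_
  linarith

end Ham

theorem stmt16 :
    ∃ C : ℝ, ∀ m : ℕ, 1 ≤ m → ∀ σ : Fin m → Bool,
      |(1 / (2 ^ (m + 1) : ℝ)) *
          Real.sqrt (∫ α in (0:ℝ)..1, ∫ β in (0:ℝ)..1, (Δtil m σ α β) ^ 2)
        - (1 / (2 ^ (m + 1) : ℝ)) *
            Real.sqrt (Real.log ((2 : ℝ) ^ (m + 1)) / (24 * Real.log 2))|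
        ≤ C / (2 ^ (m + 1) : ℝ) := by
  refine ⟨125, fun m _ σ => ?_⟩
  have hA0 : 0 ≤ ∫ α in (0:ℝ)..1, ∫ β in (0:ℝ)..1, (Δtil m σ α β) ^ 2 :=
    intervalIntegral.integral_nonneg zero_le_one fun _ _ =>
      intervalIntegral.integral_nonneg zero_le_one fun _ _ => sq_nonneg _
  have hA := Ham.til_sq_bound σ
  generalize (∫ α in (0:ℝ)..1, ∫ β in (0:ℝ)..1, (Δtil m σ α β) ^ 2) = A at *
  have hlog : Real.log ((2 : ℝ) ^ (m + 1)) / (24 * Real.log 2) = ((m : ℝ) + 1) / 24 := by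
    have : Real.log 2 ≠ 0 := (Real.log_pos (by norm_num)).ne'
    rw [Real.log_pow]
    push_cast
    field_simp
  have hM : (0 : ℝ) ≤ ((m : ℝ) + 1) / 24 := by positivity
  rw [hlog, ← mul_sub, abs_mul, abs_of_pos (by positivity : (0 : ℝ) < 1 / 2 ^ (m + 1)),
    one_div_mul_eq_div]
  gcongr
  have hx := Real.sqrt_nonneg A
  have hx2 := Real.sq_sqrt hA0
  have hy2 := Real.sq_sqrt hM
  have hs : √((m : ℝ) + 1) ≤ 5 * √(((m : ℝ) + 1) / 24) := by
    rw [Real.sqrt_le_left (by positivity), mul_pow, hy2]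
    linarith
  have hy : 0 < √(((m : ℝ) + 1) / 24) := Real.sqrt_pos.mpr (by positivity)
  generalize √A = x at *
  generalize √(((m : ℝ) + 1) / 24) = y at *
  -- `|x - y| (x + y) = |x ^ 2 - y ^ 2| ≤ 125 y ≤ 125 (x + y)`
  have h1 : |x - y| * (x + y) ≤ 125 * y := by
    have : (x - y) * (x + y) = A - ((m : ℝ) + 1) / 24 := by rw [← hx2, ← hy2]; ring
    calc |x - y| * (x + y) = |(x - y) * (x + y)| := by
          rw [abs_mul, abs_of_nonneg (by linarith : 0 ≤ x + y)]
      _ ≤ 25 * √((m : ℝ) + 1) := by rwa [this]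
      _ ≤ 125 * y := by linarith
  nlinarith [abs_nonneg (x - y)]
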